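/- Let Γ be a d×d positive definite matrix, θ, θ̂ ∈ ℝ^d with ‖θ̂ − θ‖_Γ ≤ γ for some γ ≥ 0, and let z_a, z_b ∈ ℝ^d be two action feature vectors. If action b is eliminated by action a, i.e. ⟨θ̂, z_a − z_b⟩ > γ·‖z_a − z_b‖_{Γ⁻¹}, then ⟨θ, z_a − z_b⟩ ≥ 0; that is, the elimination rule never eliminates an action whose true expected reward is strictly larger. -/

import Mathlib

open Matrix

/-!
Cauchy–Schwarz for the form `(x, y) ↦ xᵀ M y`, applied to `x` and `M⁻¹ y`, shows that `‖·‖_M` and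
`‖·‖_{M⁻¹}` are dual to each other. Hence `⟨θ̂, x⟩ - γ ‖x‖_{M⁻¹}` is a lower confidence bound for
`⟨θ, x⟩`, and elimination says exactly that this bound is positive at `x = z_a - z_b`.
-/

section CauchySchwarz

variable {n : Type*} [Fintype n]

theorem sq_dotProduct_mulVec_le_of_posSemidef {R : Type*} [CommRing R] [LinearOrder R]
    [IsStrictOrderedRing R] [StarRing R] [TrivialStar R] {M : Matrix n n R} (hM : M.PosSemidef)
    (x y : n → R) :
    (x ⬝ᵥ M *ᵥ y) ^ 2 ≤ (x ⬝ᵥ M *ᵥ x) * (y ⬝ᵥ M *ᵥ y) := by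
  classical
  have hnonneg (z : n → R) : 0 ≤ M.toBilin' z z := by
    simpa only [toBilin'_apply', star_trivial] using hM.dotProduct_mulVec_nonneg z
  have hsymm : M.toBilin'.IsSymm :=
    isSymm_toBilin'_iff_isSymm.mpr (isHermitian_iff_isSymm.mp hM.isHermitian)
  simpa only [toBilin'_apply'] using
    M.toBilin'.apply_sq_le_of_symm hnonneg (LinearMap.BilinForm.isSymm_iff.mp hsymm) x y

theorem sq_dotProduct_le_of_posDef {K : Type*} [Field K] [LinearOrder K] [IsStrictOrderedRing K]
    [StarRing K] [TrivialStar K] [DecidableEq n] {M : Matrix n n K} (hM : M.PosDef)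
    (x y : n → K) :
    (x ⬝ᵥ y) ^ 2 ≤ (x ⬝ᵥ M *ᵥ x) * (y ⬝ᵥ M⁻¹ *ᵥ y) := by
  have : Invertible M := hM.isUnit.invertible
  have hy : M *ᵥ (M⁻¹ *ᵥ y) = y := by
    rw [mulVec_mulVec, mul_inv_of_invertible, one_mulVec]
  simpa only [hy, dotProduct_comm (M⁻¹ *ᵥ y) y] using
    sq_dotProduct_mulVec_le_of_posSemidef hM.posSemidef x (M⁻¹ *ᵥ y)

end CauchySchwarz

section Mahalanobis

variable {n : Type*} [Fintype n]

/-- The Mahalanobis norm `‖x‖_M = √(xᵀ M x)`, used for a positive semidefinite `M`; where the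
quadratic form is negative, `Real.sqrt` makes the value `0`. It is a bare function rather than a
`Norm` instance because one vector is measured by both `M` and `M⁻¹`. -/
noncomputable def mahalanobisNorm (M : Matrix n n ℝ) (x : n → ℝ) : ℝ :=
  √(x ⬝ᵥ M *ᵥ x)

theorem mahalanobisNorm_nonneg (M : Matrix n n ℝ) (x : n → ℝ) : 0 ≤ mahalanobisNorm M x :=
  Real.sqrt_nonneg _

variable [DecidableEq n] {M : Matrix n n ℝ}

theorem dotProduct_le_mahalanobisNorm_mul_mahalanobisNorm_inv (hM : M.PosDef) (x y : n → ℝ) :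
    x ⬝ᵥ y ≤ mahalanobisNorm M x * mahalanobisNorm M⁻¹ y := by
  have hx : 0 ≤ x ⬝ᵥ M *ᵥ x := hM.posSemidef.dotProduct_mulVec_nonneg x
  rw [mahalanobisNorm, mahalanobisNorm, ← Real.sqrt_mul hx]
  exact Real.le_sqrt_of_sq_le (sq_dotProduct_le_of_posDef hM x y)

theorem dotProduct_sub_mul_mahalanobisNorm_inv_le (hM : M.PosDef) {γ : ℝ} {θ θhat : n → ℝ}
    (hest : mahalanobisNorm M (θhat - θ) ≤ γ) (x : n → ℝ) :
    θhat ⬝ᵥ x - γ * mahalanobisNorm M⁻¹ x ≤ θ ⬝ᵥ x := by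
  have herror : θhat ⬝ᵥ x - θ ⬝ᵥ x ≤ γ * mahalanobisNorm M⁻¹ x :=
    calc θhat ⬝ᵥ x - θ ⬝ᵥ x = (θhat - θ) ⬝ᵥ x := (sub_dotProduct θhat θ x).symm
      _ ≤ mahalanobisNorm M (θhat - θ) * mahalanobisNorm M⁻¹ x :=
        dotProduct_le_mahalanobisNorm_mul_mahalanobisNorm_inv hM _ _
      _ ≤ γ * mahalanobisNorm M⁻¹ x :=
        mul_le_mul_of_nonneg_right hest (mahalanobisNorm_nonneg _ _)
  exact sub_le_comm.mp herror

theorem stmt_15_general (hM : M.PosDef) {γ : ℝ} {θ θhat : n → ℝ}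
    (hest : mahalanobisNorm M (θhat - θ) ≤ γ) {za zb : n → ℝ}
    (helim : γ * mahalanobisNorm M⁻¹ (za - zb) < θhat ⬝ᵥ (za - zb)) :
    0 < θ ⬝ᵥ (za - zb) :=
  (sub_pos.mpr helim).trans_le (dotProduct_sub_mul_mahalanobisNorm_inv_le hM hest _)

end Mahalanobis

/-- **Soundness of the elimination rule.**
Let `Γ ≻ 0`, `‖θ̂ − θ‖_Γ ≤ γ` with `γ ≥ 0`, and let `z_a, z_b` be two action feature vectors.
If `⟨θ̂, z_a − z_b⟩ > γ ‖z_a − z_b‖_{Γ⁻¹}` (action `b` is eliminated by `a`),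
then `⟨θ, z_a − z_b⟩ ≥ 0`: the eliminated action's true reward is not strictly larger. -/
theorem stmt_15 {d : ℕ} (γ : ℝ) (hγ : 0 ≤ γ)
    (Γ : Matrix (Fin d) (Fin d) ℝ) (hΓ : Γ.PosDef)
    (θ θhat : Fin d → ℝ)
    (hest : Real.sqrt ((θhat - θ) ⬝ᵥ Γ.mulVec (θhat - θ)) ≤ γ)
    (za zb : Fin d → ℝ)
    (helim : γ * Real.sqrt ((za - zb) ⬝ᵥ Γ⁻¹.mulVec (za - zb)) < θhat ⬝ᵥ (za - zb)) :
    0 ≤ θ ⬝ᵥ (za - zb) :=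
  (stmt_15_general hΓ hest helim).le
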